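/- Let 0 < α ≤ 1 and β ≥ α be real numbers. Then the function f(x) = E_{α,β}(−x) is completely monotone on (0, ∞): f is infinitely differentiable on (0, ∞) and for every integer j ≥ 0 and every x > 0, (−1)^j · f^{(j)}(x) ≥ 0 (where f^{(j)} denotes the j-th derivative). -/

import Mathlib

open Filter Topology

noncomputable def mlB (n : ℕ) (a : ℝ) : ℝ := (∏ i ∈ Finset.range n, (a + i)) / n.factorial

lemma mlB_eq (n : ℕ) (a : ℝ) : mlB n a = (-1) ^ n * Ring.choose (-a) n := by
  have h1 : ∏ i ∈ Finset.range n, (a + i) = (ascPochhammer ℝ n).eval a := by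
    induction n with
    | zero => simp
    | succ n ih => rw [Finset.prod_range_succ, ih, ascPochhammer_succ_eval]
  have h2 := Ring.factorial_nsmul_multichoose_eq_ascPochhammer a n
  rw [Polynomial.ascPochhammer_smeval_eq_eval, ← h1] at h2
  have h3 := Ring.choose_neg' a n
  have h4 : Ring.multichoose a n = mlB n a := by
    rw [mlB, ← h2, nsmul_eq_mul, mul_div_cancel_left₀]
    exact_mod_cast n.factorial_ne_zero
  rw [h3, h4]
  rcases Nat.even_or_odd n with h | h
  · rw [Int.negOnePow_even _ (by exact_mod_cast h), h.neg_one_pow]; simp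
  · rw [Int.negOnePow_odd _ (by exact_mod_cast h), h.neg_one_pow]; simp

lemma mlB_conv (n : ℕ) (a c : ℝ) :
    ∑ p ∈ Finset.HasAntidiagonal.antidiagonal n, mlB p.1 a * mlB p.2 c = mlB n (a + c) := by
  rw [mlB_eq n, neg_add, Ring.add_choose_eq n (Commute.all _ _), Finset.mul_sum]
  refine Finset.sum_congr rfl fun p hp => ?_
  rw [mlB_eq, mlB_eq, ← Finset.HasAntidiagonal.mem_antidiagonal.1 hp, pow_add]
  ring

lemma mlB_nonneg (n : ℕ) {a : ℝ} (ha : 0 ≤ a) : 0 ≤ mlB n a := by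
  unfold mlB; positivity

lemma mlB_neg (n : ℕ) {α : ℝ} (h0 : 0 ≤ α) (h1 : α ≤ 1) : mlB (n + 1) (-α) ≤ 0 := by
  unfold mlB
  rw [Finset.prod_range_succ']
  apply div_nonpos_of_nonpos_of_nonneg _ (by positivity)
  apply mul_nonpos_of_nonneg_of_nonpos
  · exact Finset.prod_nonneg fun i _ => by push_cast; nlinarith [(Nat.cast_nonneg i : (0:ℝ) ≤ i)]
  · simpa using h0

lemma mlB_zero (a : ℝ) : mlB 0 a = 1 := by simp [mlB]

noncomputable def mlT (α γ y : ℝ) (J n k : ℕ) : ℝ :=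
  (Nat.multichoose J k : ℝ) * (-y) ^ k * mlB n (α * (k + J) + γ)

lemma mc_le (J k : ℕ) : (Nat.multichoose J k) ≤ (k + J) ^ J := by
  rcases J with _ | J
  · rcases k with _ | k <;> simp
  · rw [Nat.multichoose_eq]
    have : J + 1 + k - 1 = k + J := by omega
    rw [this, Nat.choose_symm_add]
    calc _ ≤ (k + J) ^ J := Nat.choose_le_pow _ _
      _ ≤ (k + (J + 1)) ^ J := Nat.pow_le_pow_left (by omega) _
      _ ≤ _ := Nat.pow_le_pow_right (by omega) (by omega)

lemma mlT_summable {α γ y : ℝ} (h0 : 0 ≤ α) (h1 : α ≤ 1) (hγ : 0 ≤ γ) (hy0 : 0 < y) (hy1 : y < 1)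
    (J n : ℕ) : Summable (mlT α γ y J n) := by
  set M : ℝ := J + γ + n + 1 with hM
  have hMpos : 0 < M := by positivity
  have hs : Summable fun k : ℕ => M ^ (J + n) * (((k + 1 : ℕ) : ℝ) ^ (J + n) * y ^ (k + 1)) / y := by
    have := summable_pow_mul_geometric_of_norm_lt_one (R := ℝ) (J + n) (r := y)
      (by rwa [Real.norm_of_nonneg hy0.le])
    exact (((summable_nat_add_iff 1).2 this).mul_left _).div_const _
  refine Summable.of_norm_bounded hs fun k => ?_
  have hk : (0:ℝ) ≤ k := Nat.cast_nonneg k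
  have hJ : (0:ℝ) ≤ J := Nat.cast_nonneg J
  have hn : (0:ℝ) ≤ n := Nat.cast_nonneg n
  have e1 : (Nat.multichoose J k : ℝ) ≤ (M * (k + 1)) ^ J := by
    calc (Nat.multichoose J k : ℝ) ≤ ((k : ℝ) + J) ^ J := by exact_mod_cast mc_le J k
      _ ≤ _ := by
        apply pow_le_pow_left₀ (by positivity)
        rw [hM]; nlinarith [mul_nonneg hk hJ, mul_nonneg hk hγ, mul_nonneg hk hn]
  have ha : 0 ≤ α * (k + J) + γ := by positivity
  have e2 : mlB n (α * (k + J) + γ) ≤ (M * (k + 1)) ^ n := by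
    unfold mlB
    calc _ ≤ ∏ i ∈ Finset.range n, (α * (k + J) + γ + i) := by
            apply div_le_self (Finset.prod_nonneg fun i _ => by positivity)
            exact_mod_cast n.factorial_pos
      _ ≤ ∏ i ∈ Finset.range n, (M * (k + 1)) := by
            apply Finset.prod_le_prod (fun i _ => by positivity)
            intro i hi
            have : (i : ℝ) ≤ n := by exact_mod_cast (Finset.mem_range.1 hi).le
            have h3 : α * (k + J) ≤ k + J := by
              have : (0:ℝ) ≤ k + J := by positivity
              nlinarith
            rw [hM]; nlinarith [mul_nonneg hk hJ, mul_nonneg hk hγ, mul_nonneg hk hn]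
      _ = _ := by simp
  have hb := mlB_nonneg n ha
  rw [mlT, norm_mul, norm_mul, norm_pow, norm_neg, Real.norm_of_nonneg hy0.le,
    Real.norm_of_nonneg hb, Real.norm_of_nonneg (Nat.cast_nonneg _)]
  calc _ ≤ (M * (k + 1)) ^ J * y ^ k * (M * (k + 1)) ^ n := by gcongr
    _ = _ := by push_cast; rw [mul_pow, mul_pow]; field_simp; ring

lemma mlQ_rel {α γ y : ℝ} (h0 : 0 ≤ α) (h1 : α ≤ 1) (hγ : 0 ≤ γ) (hy0 : 0 < y) (hy1 : y < 1)
    (J n : ℕ) :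
    ∑ p ∈ Finset.HasAntidiagonal.antidiagonal n, mlB p.1 (-α) * ∑' k, mlT α γ y (J + 1) p.2 k
      + y * ∑' k, mlT α γ y (J + 1) n k = ∑' k, mlT α γ y J n k := by
  have hS := fun J n => mlT_summable h0 h1 hγ hy0 hy1 J n
  have hsum : ∀ p : ℕ × ℕ, Summable fun k => mlB p.1 (-α) * mlT α γ y (J + 1) p.2 k :=
    fun p => (hS _ _).mul_left _
  have e : ∀ k, ∑ p ∈ Finset.HasAntidiagonal.antidiagonal n, mlB p.1 (-α) * mlT α γ y (J + 1) p.2 k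
      = (Nat.multichoose (J + 1) k : ℝ) * (-y) ^ k * mlB n (α * (k + J) + γ) := by
    intro k
    have : α * (k + J) + γ = -α + (α * (k + (J + 1 : ℕ)) + γ) := by push_cast; ring
    rw [this, ← mlB_conv, Finset.mul_sum]
    exact Finset.sum_congr rfl fun p _ => by rw [mlT]; ring
  simp_rw [← tsum_mul_left]
  rw [← Summable.tsum_finsetSum (fun p _ => hsum p)]
  simp_rw [e]
  have hu : Summable fun k : ℕ =>
      (Nat.multichoose (J + 1) k : ℝ) * (-y) ^ k * mlB n (α * (k + J) + γ) := by
    simp_rw [← e]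
    exact summable_sum fun p _ => hsum p
  have hw := hu.sub (hS J n)
  have hw' := hw.tsum_eq_zero_add
  have e0 : ∑' k, y * mlT α γ y (J + 1) n k = - ∑' k : ℕ,
      ((Nat.multichoose (J + 1) k : ℝ) * (-y) ^ k * mlB n (α * (k + J) + γ) - mlT α γ y J n k) := by
    rw [hw']
    simp only [mlT, Nat.multichoose_succ_succ]
    simp only [Nat.multichoose_zero_right, sub_self, zero_add]
    rw [← tsum_neg]
    refine tsum_congr fun k => ?_
    have : α * ((k:ℝ) + (J + 1 : ℕ)) + γ = α * ((k + 1 : ℕ) + J) + γ := by push_cast; ring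
    rw [this]
    push_cast
    ring
  rw [e0, hu.tsum_sub (hS J n)]
  ring

lemma mlQ_nonneg {α γ y : ℝ} (h0 : 0 ≤ α) (h1 : α ≤ 1) (hγ : 0 ≤ γ) (hy0 : 0 < y) (hy1 : y < 1)
    (J n : ℕ) : 0 ≤ ∑' k, mlT α γ y J n k := by
  induction J generalizing n with
  | zero =>
    refine tsum_nonneg fun k => ?_
    rcases k with _ | k
    · simpa [mlT] using mlB_nonneg n hγ
    · simp [mlT]
  | succ J ih =>
    induction n using Nat.strong_induction_on with
    | _ n ihn =>
      have h := mlQ_rel h0 h1 hγ hy0 hy1 J n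
      have hR := ih n
      have hs : ∑ p ∈ Finset.HasAntidiagonal.antidiagonal n, mlB p.1 (-α) * ∑' k, mlT α γ y (J + 1) p.2 k
          ≤ ∑' k, mlT α γ y (J + 1) n k := by
        have : ∑' k, mlT α γ y (J + 1) n k
            = ∑ p ∈ Finset.HasAntidiagonal.antidiagonal n, if p = (0, n) then ∑' k, mlT α γ y (J + 1) n k else 0 := by
          rw [Finset.sum_ite_eq' (Finset.HasAntidiagonal.antidiagonal n)]; simp
        rw [this]
        refine Finset.sum_le_sum fun p hp => ?_
        obtain ⟨i, l⟩ := p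
        have hil : i + l = n := Finset.HasAntidiagonal.mem_antidiagonal.1 hp
        rcases i with _ | i
        · have : l = n := by omega
          subst this
          simp [mlB_zero]
        · simp only [Prod.mk.injEq, Nat.add_eq_zero_iff, one_ne_zero, and_false, false_and, if_false]
          exact mul_nonpos_of_nonpos_of_nonneg (mlB_neg i h0 h1) (ihn l (by omega))
      nlinarith

noncomputable def mlG (n : ℕ) (a : ℝ) : ℝ := (Real.GammaSeq a n)⁻¹

lemma mlG_eq (n : ℕ) (a : ℝ) :
    mlG n a = (∏ i ∈ Finset.range (n + 1), (a + i)) / ((n : ℝ) ^ a * n.factorial) := by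
  rw [mlG, Real.GammaSeq, inv_div]

lemma mlG_tendsto {a : ℝ} (ha : 0 < a) :
    Tendsto (fun n => mlG n a) atTop (𝓝 (Real.Gamma a)⁻¹) :=
  (Real.GammaSeq_tendsto_Gamma a).inv₀ (Real.Gamma_pos_of_pos ha).ne'

lemma ml_prod_le {α a : ℝ} (h0 : 0 ≤ α) (h1 : α ≤ 1) (ha : 1 < a) (m : ℕ) :
    ∏ i ∈ Finset.range m, (a + α + i) ≤
      (∏ i ∈ Finset.range m, (a + i)) * ((a + m - 1) / (a - 1)) ^ α := by
  induction m with
  | zero => simp [div_self (by linarith : a - 1 ≠ 0)]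
  | succ m ih =>
    rw [Finset.prod_range_succ, Finset.prod_range_succ]
    have hm : (0:ℝ) ≤ m := Nat.cast_nonneg m
    have hc : 0 < a + m := by linarith
    have hc1 : 0 < a + m - 1 := by linarith
    have key : (a + m + α) * ((a + m - 1) / (a - 1)) ^ α ≤ (a + m) * ((a + m) / (a - 1)) ^ α := by
      have hB := rpow_one_add_le_one_add_mul_self (s := -1 / (a + m))
        (by rw [le_div_iff₀ hc]; linarith) h0 h1
      have e1 : 1 + -1 / (a + m) = (a + m - 1) / (a + m) := by field_simp; ring
      rw [e1] at hB
      have e2 : ((a + m - 1) / (a - 1)) ^ α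
          = ((a + m - 1) / (a + m)) ^ α * ((a + m) / (a - 1)) ^ α := by
        rw [← Real.mul_rpow (by positivity) (div_nonneg hc.le (by linarith))]
        congr 1; field_simp
      rw [e2, ← mul_assoc]
      have hp : 0 ≤ ((a + m) / (a - 1)) ^ α := Real.rpow_nonneg (div_nonneg hc.le (by linarith)) _
      apply mul_le_mul_of_nonneg_right _ hp
      calc (a + m + α) * ((a + m - 1) / (a + m)) ^ α
          ≤ (a + m + α) * (1 + α * (-1 / (a + m))) := by gcongr
        _ = (a + m) - α ^ 2 / (a + m) := by field_simp; ring
        _ ≤ a + m := by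
          have : 0 ≤ α ^ 2 / (a + m) := by positivity
          linarith
    have hP : 0 ≤ ∏ i ∈ Finset.range m, (a + i) := Finset.prod_nonneg fun i _ => by positivity
    calc _ ≤ (∏ i ∈ Finset.range m, (a + i)) * ((a + m - 1) / (a - 1)) ^ α * (a + α + m) := by
            gcongr
      _ = (∏ i ∈ Finset.range m, (a + i)) * ((a + m + α) * ((a + m - 1) / (a - 1)) ^ α) := by ring
      _ ≤ (∏ i ∈ Finset.range m, (a + i)) * ((a + m) * ((a + m) / (a - 1)) ^ α) := by gcongr
      _ = _ := by
        have : a + ((m + 1 : ℕ) : ℝ) - 1 = a + m := by push_cast; ring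
        rw [this]; ring

lemma mlG_nonneg (n : ℕ) {a : ℝ} (ha : 0 ≤ a) : 0 ≤ mlG n a := by
  rw [mlG_eq]; positivity

lemma mlG_ratio {α a : ℝ} (h0 : 0 ≤ α) (h1 : α ≤ 1) (ha : 1 < a) {n : ℕ} (hn : 0 < n) :
    mlG n (a + α) ≤ mlG n a * ((a + n) / ((a - 1) * n)) ^ α := by
  have hn' : (0:ℝ) < n := by exact_mod_cast hn
  have h := ml_prod_le h0 h1 ha (n + 1)
  have e : a + ((n + 1 : ℕ) : ℝ) - 1 = a + n := by push_cast; ring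
  rw [e] at h
  have ha1 : 0 < a - 1 := by linarith
  have e2 : ((a + n) / ((a - 1) * n)) ^ α = ((a + n) / (a - 1)) ^ α / (n : ℝ) ^ α := by
    rw [← Real.div_rpow (by positivity) hn'.le, div_div]
  rw [mlG_eq, mlG_eq, e2, Real.rpow_add hn', div_mul_div_comm]
  rw [show (n:ℝ) ^ a * n.factorial * (n:ℝ) ^ α = (n:ℝ) ^ a * (n:ℝ) ^ α * n.factorial by ring]
  gcongr

noncomputable def mlS (α γ x : ℝ) (J n k : ℕ) : ℝ :=
  (Nat.multichoose J k : ℝ) * (-x) ^ k * mlG n (α * (k + J) + γ)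

noncomputable def mlL (α γ x : ℝ) (J k : ℕ) : ℝ :=
  (Nat.multichoose J k : ℝ) * (-x) ^ k * (Real.Gamma (α * (k + J) + γ))⁻¹

lemma mlS_tendsto {α γ : ℝ} (h0 : 0 < α) (hγ : 0 ≤ γ) (x : ℝ) {J : ℕ} (hJ : 0 < J) (k : ℕ) :
    Tendsto (fun n => mlS α γ x J n k) atTop (𝓝 (mlL α γ x J k)) := by
  have : (0:ℝ) < J := by exact_mod_cast hJ
  exact (mlG_tendsto (by positivity)).const_mul _

lemma mc_ratio {J : ℕ} (hJ : 0 < J) (k : ℕ) :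
    Nat.multichoose J (k + 1) ≤ J * Nat.multichoose J k := by
  obtain ⟨j, rfl⟩ : ∃ j, J = j + 1 := ⟨J - 1, by omega⟩
  rw [Nat.multichoose_eq, Nat.multichoose_eq]
  have e1 : j + 1 + (k + 1) - 1 = (j + k) + 1 := by omega
  have e2 : j + 1 + k - 1 = j + k := by omega
  rw [e1, e2]
  have := Nat.add_one_mul_choose_eq (j + k) k
  apply Nat.le_of_mul_le_mul_right (c := k + 1) _ (by omega)
  rw [← this]
  have : j + k + 1 ≤ (j + 1) * (k + 1) := by nlinarith
  calc _ ≤ (j + 1) * (k + 1) * (j + k).choose k := Nat.mul_le_mul_right _ this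
    _ = _ := by ring

lemma mlS_ratio {α γ : ℝ} (h0 : 0 < α) (h1 : α ≤ 1) (hγ : 0 ≤ γ) (x : ℝ) {J : ℕ} (hJ : 0 < J) :
    ∃ K N : ℕ, ∀ n ≥ N, ∀ k ≥ K, ‖mlS α γ x J n (k + 1)‖ ≤ ‖mlS α γ x J n k‖ * (1 / 2) := by
  set c : ℝ := 1 / (2 * (J * |x| + 1)) with hc
  have hcpos : 0 < c := by positivity
  set ε : ℝ := c ^ (1 / α) with hε
  have hεpos : 0 < ε := by positivity
  have hεα : ε ^ α = c := by
    rw [hε, ← Real.rpow_mul hcpos.le, one_div_mul_cancel h0.ne', Real.rpow_one]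
  obtain ⟨K, hK⟩ := exists_nat_ge ((2 + 2 / ε) / α)
  obtain ⟨N, hN⟩ := exists_nat_ge (4 / ε)
  refine ⟨K, N + 1, fun n hn k hk => ?_⟩
  have hn' : 4 / ε ≤ n := hN.trans (by exact_mod_cast (by omega : N ≤ n))
  have hk' : (2 + 2 / ε) / α ≤ k := hK.trans (by exact_mod_cast hk)
  rw [div_le_iff₀ h0] at hk'
  set a : ℝ := α * (k + J) + γ with ha
  have hJ' : (0:ℝ) ≤ α * J := by positivity
  have ha2 : 2 + 2 / ε ≤ a := by rw [ha]; nlinarith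
  have h2ε : 0 < 2 / ε := by positivity
  have hnpos : (0:ℝ) < n := lt_of_lt_of_le (by positivity) hn'
  have hr := mlG_ratio h0.le h1 (a := a) (by linarith) (n := n) (by exact_mod_cast hnpos)
  have hle : (a + n) / ((a - 1) * n) ≤ ε := by
    rw [div_le_iff₀ (mul_pos (by linarith) hnpos)]
    rw [div_le_iff₀ hεpos] at hn'
    have : 2 ≤ (a - 1) * ε := by
      rw [← div_le_iff₀ hεpos]; linarith
    nlinarith
  have hGn := mlG_nonneg n (a := a) (by linarith)
  have hr2 : mlG n (a + α) ≤ mlG n a * c := by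
    rw [← hεα]
    refine hr.trans ?_
    have : 0 ≤ (a + n) / ((a - 1) * n) := div_nonneg (by linarith) (mul_pos (by linarith) hnpos).le
    gcongr
  have ea : α * (((k + 1 : ℕ) : ℝ) + J) + γ = a + α := by rw [ha]; push_cast; ring
  have hG2 := mlG_nonneg n (a := a + α) (by linarith)
  rw [mlS, mlS, ea, ← ha]
  simp only [norm_mul, norm_pow, norm_neg, Real.norm_of_nonneg hGn, Real.norm_of_nonneg hG2,
    RCLike.norm_natCast, Real.norm_eq_abs]
  have hm : (Nat.multichoose J (k + 1) : ℝ) ≤ J * Nat.multichoose J k := by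
    exact_mod_cast mc_ratio hJ k
  have hxc : J * |x| * c ≤ 1 / 2 := by
    rw [hc, mul_one_div, div_le_iff₀ (by positivity)]; linarith
  calc _ ≤ (J * Nat.multichoose J k) * |x| ^ (k + 1) * (mlG n a * c) := by gcongr
    _ = (Nat.multichoose J k * |x| ^ k * mlG n a) * (J * |x| * c) := by ring
    _ ≤ _ := by gcongr

lemma mlS_bound {α γ : ℝ} (h0 : 0 < α) (h1 : α ≤ 1) (hγ : 0 ≤ γ) (x : ℝ) {J : ℕ} (hJ : 0 < J) :
    ∃ M : ℝ, ∀ᶠ n in atTop, ∀ k, ‖mlS α γ x J n k‖ ≤ M * (1 / 2) ^ k := by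
  obtain ⟨K, N, hKN⟩ := mlS_ratio h0 h1 hγ x hJ
  have hb : ∀ k, ∃ B, ∀ n, ‖mlS α γ x J n k‖ ≤ B := fun k => by
    obtain ⟨B, hB⟩ := ((mlS_tendsto h0 hγ x hJ k).norm).bddAbove_range
    exact ⟨B, fun n => hB ⟨n, rfl⟩⟩
  choose B hB using hb
  have hB0 : ∀ k, 0 ≤ B k := fun k => (norm_nonneg _).trans (hB k 0)
  set M := ∑ k ∈ Finset.range (K + 1), B k
  have hM : ∀ k ≤ K, B k ≤ M := fun k hk =>
    Finset.single_le_sum (fun i _ => hB0 i) (Finset.mem_range.2 (by omega))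
  have hM0 : 0 ≤ M := (hB0 0).trans (hM 0 (Nat.zero_le _))
  refine ⟨M * 2 ^ K, ?_⟩
  filter_upwards [eventually_ge_atTop N] with n hn k
  have hle : ∀ k ≤ K, ‖mlS α γ x J n k‖ ≤ M * 2 ^ K * (1 / 2) ^ k := fun k hk => by
    refine (hB k n).trans ((hM k hk).trans ?_)
    obtain ⟨d, rfl⟩ := Nat.exists_eq_add_of_le hk
    have : M * 2 ^ (k + d) * (1 / 2) ^ k = M * 2 ^ d := by
      rw [pow_add, one_div, inv_pow]; field_simp
    rw [this]
    exact le_mul_of_one_le_right hM0 (one_le_pow₀ (by norm_num))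
  rcases le_total k K with h | h
  · exact hle k h
  · induction k, h using Nat.le_induction with
    | base => exact hle K le_rfl
    | succ k hk ih =>
      refine (hKN n hn k hk).trans ?_
      rw [pow_succ, ← mul_assoc]
      gcongr

lemma ml_geom (M : ℝ) : Summable fun k : ℕ => M * (1 / 2 : ℝ) ^ k :=
  summable_geometric_two.mul_left M

lemma mlL_summable {α γ : ℝ} (h0 : 0 < α) (h1 : α ≤ 1) (hγ : 0 ≤ γ) (x : ℝ) {J : ℕ} (hJ : 0 < J) :
    Summable (mlL α γ x J) := by
  obtain ⟨M, hM⟩ := mlS_bound h0 h1 hγ x hJ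
  refine Summable.of_norm_bounded (ml_geom M) fun k => ?_
  exact le_of_tendsto (mlS_tendsto h0 hγ x hJ k).norm (hM.mono fun n h => h k)

lemma mlS_eq {α γ x : ℝ} (J k : ℕ) {n : ℕ} (hn : 0 < n) :
    mlS α γ x J n k = mlT α γ (x / (n : ℝ) ^ α) J (n + 1) k
      * ((n + 1) * ((n : ℝ) ^ (α * J + γ))⁻¹) := by
  have hn' : (0:ℝ) < n := by exact_mod_cast hn
  have e : (n : ℝ) ^ (α * (k + J) + γ) = ((n : ℝ) ^ α) ^ k * (n : ℝ) ^ (α * J + γ) := by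
    rw [← Real.rpow_mul_natCast hn'.le, ← Real.rpow_add hn']; congr 1; ring
  rw [mlS, mlT, mlG_eq, mlB, e, Nat.factorial_succ, ← neg_div, div_pow]
  have : (n : ℝ) ^ (α * J + γ) ≠ 0 := by positivity
  have : ((n : ℝ) ^ α) ^ k ≠ 0 := by positivity
  push_cast
  field_simp

lemma mlL_nonneg {α γ : ℝ} (h0 : 0 < α) (h1 : α ≤ 1) (hγ : 0 ≤ γ) {x : ℝ} (hx : 0 < x)
    {J : ℕ} (hJ : 0 < J) : 0 ≤ ∑' k, mlL α γ x J k := by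
  obtain ⟨M, hM⟩ := mlS_bound h0 h1 hγ x hJ
  have ht : Tendsto (fun n => ∑' k, mlS α γ x J n k) atTop (𝓝 (∑' k, mlL α γ x J k)) :=
    tendsto_tsum_of_dominated_convergence (ml_geom M) (fun k => mlS_tendsto h0 hγ x hJ k) hM
  refine ge_of_tendsto ht ?_
  have hlarge : ∀ᶠ n : ℕ in atTop, x < (n : ℝ) ^ α :=
    ((tendsto_rpow_atTop h0).comp tendsto_natCast_atTop_atTop).eventually_gt_atTop x
  filter_upwards [hlarge, eventually_gt_atTop 0] with n h hn
  have hn' : (0:ℝ) < n := by exact_mod_cast hn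
  simp_rw [mlS_eq J _ hn]
  rw [tsum_mul_right]
  have hp : 0 < (n : ℝ) ^ α := by positivity
  exact mul_nonneg (mlQ_nonneg h0.le h1 hγ (div_pos hx hp) ((div_lt_one hp).2 h) J (n + 1))
    (by positivity)

lemma mc_deriv (j m : ℕ) :
    Nat.multichoose (j + 1) (m + 1) * (m + 1) = (j + 1) * Nat.multichoose (j + 2) m := by
  rw [Nat.multichoose_eq, Nat.multichoose_eq]
  have e1 : j + 1 + (m + 1) - 1 = j + m + 1 := by omega
  have e2 : j + 2 + m - 1 = j + m + 1 := by omega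
  rw [e1, e2, Nat.choose_succ_right_eq, mul_comm]
  congr 1; omega

lemma mlL_hasDerivAt {α γ : ℝ} (h0 : 0 < α) (h1 : α ≤ 1) (hγ : 0 ≤ γ) (x : ℝ) (j : ℕ) :
    HasDerivAt (fun x => ∑' k, mlL α γ x (j + 1) k)
      (-(j + 1) * ∑' k, mlL α γ x (j + 2) k) x := by
  let g' : ℕ → ℝ → ℝ := fun k y =>
    (Nat.multichoose (j + 1) k : ℝ) * (k * (-y) ^ (k - 1) * (-1))
      * (Real.Gamma (α * (k + (j + 1 : ℕ)) + γ))⁻¹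
  have hsucc : ∀ m y, g' (m + 1) y = -(j + 1) * mlL α γ y (j + 2) m := fun m y => by
    have h := mc_deriv j m
    have h' : (Nat.multichoose (j + 1) (m + 1) : ℝ) * (m + 1)
      = (j + 1) * Nat.multichoose (j + 2) m := by exact_mod_cast h
    simp only [g', mlL, Nat.add_sub_cancel]
    have e : α * (((m + 1 : ℕ) : ℝ) + (j + 1 : ℕ)) + γ = α * (m + (j + 2 : ℕ)) + γ := by
      push_cast; ring
    rw [e]
    push_cast
    linear_combination (-(-y) ^ m * (Real.Gamma (α * (m + (j + 2)) + γ))⁻¹) * h'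
  have hzero : ∀ y, g' 0 y = 0 := fun y => by simp [g']
  set R : ℝ := |x| + 1
  have hR : 0 < R := by positivity
  have hu : Summable fun k => ‖g' k R‖ := by
    rw [← summable_nat_add_iff 1]
    simp_rw [hsucc]
    exact ((mlL_summable h0 h1 hγ R (by omega)).mul_left _).norm
  have hd := hasDerivAt_tsum_of_isPreconnected (g := fun k y => mlL α γ y (j + 1) k) (g' := g')
    (t := Metric.ball (0:ℝ) R) (y₀ := 0) (y := x) hu Metric.isOpen_ball
    (convex_ball _ _).isPreconnected ?_ ?_ (Metric.mem_ball_self hR)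
    (mlL_summable h0 h1 hγ 0 (by omega)) (by simp [R])
  · have hs : Summable fun k => g' k x := by
      rw [← summable_nat_add_iff 1]
      simp_rw [hsucc]
      exact (mlL_summable h0 h1 hγ x (by omega)).mul_left _
    rw [hs.tsum_eq_zero_add, hzero, zero_add] at hd
    simp_rw [hsucc] at hd
    rwa [tsum_mul_left] at hd
  · intro k y _
    exact (((hasDerivAt_id y).neg.pow k).const_mul _).mul_const _
  · intro k y hy
    have hy' : |y| ≤ R := by simpa using (Metric.mem_ball.1 hy).le
    simp only [g', norm_mul, norm_pow, norm_neg]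
    rw [Real.norm_eq_abs y, Real.norm_of_nonneg hR.le]
    gcongr

/-- Complete monotonicity of `E_{α,β}(-x)` on `(0,∞)` for `0 < α ≤ 1`, `β ≥ α`. -/
theorem mittagLeffler_completely_monotone
    (α β : ℝ) (hα0 : 0 < α) (hα1 : α ≤ 1) (hβ : α ≤ β)
    (f : ℝ → ℝ) (hf : f = fun x => ∑' k : ℕ, (-x) ^ k / Real.Gamma (α * k + β)) :
    ContDiffOn ℝ (⊤ : ℕ∞) f (Set.Ioi 0) ∧
      ∀ j : ℕ, ∀ x : ℝ, 0 < x → 0 ≤ (-1 : ℝ) ^ j * iteratedDeriv j f x := by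
  have hγ : 0 ≤ β - α := by linarith
  have hf' : f = fun x => ∑' k, mlL α (β - α) x 1 k := by
    rw [hf]
    funext x
    refine tsum_congr fun k => ?_
    have : α * ((k:ℝ) + (1 : ℕ)) + (β - α) = α * k + β := by push_cast; ring
    rw [mlL, this, Nat.multichoose_one, div_eq_mul_inv]; simp
  have hit : ∀ j : ℕ, iteratedDeriv j f
      = fun x => (-1) ^ j * j.factorial * ∑' k, mlL α (β - α) x (j + 1) k := by
    intro j
    induction j with
    | zero => rw [iteratedDeriv_zero, hf']; simp
    | succ j ih =>
      rw [iteratedDeriv_succ, ih]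
      funext x
      rw [((mlL_hasDerivAt hα0 hα1 hγ x j).const_mul _).deriv, Nat.factorial_succ]
      push_cast
      ring
  constructor
  · apply ContDiff.contDiffOn
    apply contDiff_of_differentiable_iteratedDeriv
    intro m _
    rw [hit]
    exact fun x => ((mlL_hasDerivAt hα0 hα1 hγ x m).const_mul _).differentiableAt
  · intro j x hx
    rw [hit]
    have h := mlL_nonneg hα0 hα1 hγ hx (Nat.succ_pos j)
    have e : (-1 : ℝ) ^ j * ((-1) ^ j * j.factorial * ∑' k, mlL α (β - α) x (j + 1) k)
        = j.factorial * ∑' k, mlL α (β - α) x (j + 1) k := by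
      rw [← mul_assoc, ← mul_assoc, ← mul_pow]; simp
    rw [e]
    exact mul_nonneg (by positivity) h
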